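/- arXiv:2404.01351 — 2 statements merged into one kernel-verified Lean document; each statement's English description precedes it below -/
import Mathlib

section
/- (PDD decomposition step in the proof of Theorem 2.) Suppose robust confidence–prediction calibration holds with over-confident class k' and constants b ≥ 1, 0 ≤ a ≤ 1. Then the expected pairwise disagreement satisfies ∫_{Θ×Θ} ( ∫_Ω 1{h(θ, X(ω)) ≠ h(θ', X(ω))} dν(ω) ) d(μ ⊗ μ)(θ, θ') = ((b − a)/b) · T_{k'} + (1/b) · ∫_Θ Err(θ) dμ(θ), where T_{k'} = ∫_Ω h̃_{k'}(X(ω)) (1 − h̃_{k'}(X(ω))) dν(ω). -/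
open MeasureTheory

/-!
Two hypotheses disagree at a test point exactly when, for some class `k`, the first votes for `k`
and the second does not. Hence the expected disagreement is `∑ k, T k` with
`T k = ∫ h̃ k * (1 - h̃ k)`. Likewise a hypothesis errs exactly when, for some `k`, the true class
is `k` and the vote is not, so the mean test error is `∑ k, ∫ 1{Y = k} * (1 - h̃ k)`. Since
`1 - h̃ k` is a function of the confidence `h̃ k`, calibration with constants `c k` replaces the
indicator by `c k * h̃ k`, and the mean test error becomes `∑ k, c k * T k`. With `c k' = a` and all
other `c k` equal to `b`, this is `b * ∑ k, T k - (b - a) * T k'`.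
-/

section MeasureLemmas

variable {α β L : Type*} [MeasurableSpace α] [MeasurableSpace β]

theorem integral_measureReal_slice_comm (μ : Measure α) (ν : Measure β)
    [IsFiniteMeasure μ] [IsFiniteMeasure ν] {S : Set (α × β)} (hS : MeasurableSet S) :
    ∫ x, ν.real {y | (x, y) ∈ S} ∂μ = ∫ y, μ.real {x | (x, y) ∈ S} ∂ν := by
  have left_slice (x : α) : ν.real {y | (x, y) ∈ S} = ∫ y, S.indicator 1 (x, y) ∂ν :=
    (integral_indicator_one (measurable_prodMk_left hS)).symm
  have right_slice (y : β) : μ.real {x | (x, y) ∈ S} = ∫ x, S.indicator 1 (x, y) ∂μ :=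
    (integral_indicator_one (measurable_prodMk_right hS)).symm
  simp_rw [left_slice, right_slice]
  exact integral_integral_swap ((integrable_const (1 : ℝ)).indicator hS)

variable [MeasurableSpace L]

theorem integral_ite_eq_zero_one [MeasurableEq L] [DecidableEq L] (ν : Measure α) {u v : α → L}
    (hu : Measurable u) (hv : Measurable v) :
    ∫ x, (if u x = v x then (0 : ℝ) else 1) ∂ν = ν.real {x | u x ≠ v x} := by
  have measurableSet_ne : MeasurableSet {x | u x ≠ v x} := (measurableSet_eq_fun hu hv).compl
  rw [← integral_indicator_one measurableSet_ne]
  congr with x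
  simp [Set.indicator_apply]

variable [MeasurableSingletonClass L]

theorem integrable_ite_eq_one_zero [DecidableEq L] {ν : Measure α} [IsFiniteMeasure ν] {v : α → L}
    (hv : Measurable v) (k : L) : Integrable (fun x => if v x = k then (1 : ℝ) else 0) ν :=
  .of_bound (Measurable.ite (hv (measurableSet_singleton k)) measurable_const
    measurable_const).aestronglyMeasurable 1 (.of_forall fun x => by split_ifs <;> simp)

theorem measureReal_prod_ne [Fintype L] (μ : Measure α) (ν : Measure β)
    [IsFiniteMeasure μ] [IsFiniteMeasure ν] {u : α → L} {v : β → L}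
    (hu : Measurable u) (hv : Measurable v) :
    (μ.prod ν).real {p | u p.1 ≠ v p.2} = ∑ k, μ.real {x | u x = k} * ν.real {y | v y ≠ k} := by
  have ne_eq_iUnion : {p : α × β | u p.1 ≠ v p.2} = ⋃ k, {x | u x = k} ×ˢ {y | v y ≠ k} := by
    ext p
    simp [eq_comm]
  have pairwise_disjoint :
      Pairwise (Function.onFun Disjoint fun k => {x | u x = k} ×ˢ {y | v y ≠ k}) :=
    fun _ _ hjk => Set.disjoint_left.2 fun _ hj hk => hjk (hj.1.symm.trans hk.1)
  rw [ne_eq_iUnion, measureReal_iUnion_fintype pairwise_disjoint fun k =>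
    (hu (measurableSet_singleton k)).prod (hv (measurableSet_singleton k)).compl]
  simp_rw [measureReal_prod_prod]

end MeasureLemmas

theorem integral_mul_of_condExp_ae_eq {Ω : Type*} {m m₀ : MeasurableSpace Ω} {ν : Measure Ω}
    (hm : m ≤ m₀) [SigmaFinite (ν.trim hm)] {φ f f' : Ω → ℝ} (hφ : StronglyMeasurable[m] φ)
    (hφf : Integrable (φ * f) ν) (hf : Integrable f ν) (hf' : ν[f | m] =ᵐ[ν] f') :
    ∫ ω, φ ω * f ω ∂ν = ∫ ω, φ ω * f' ω ∂ν := calc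
  ∫ ω, φ ω * f ω ∂ν = ∫ ω, (ν[φ * f | m]) ω ∂ν := (integral_condExp hm).symm
  _ = ∫ ω, φ ω * f' ω ∂ν := integral_congr_ae <|
    (condExp_mul_of_stronglyMeasurable_left hφ hφf hf).trans (hf'.mono fun _ h => by simp [h])

section Voting

variable {Θ Ω L : Type*} [MeasurableSpace Θ] [MeasurableSpace Ω]

/-- The expectation function `h̃ k`: the share of hypotheses voting for the class `k` at a test
point. The predictor `g (θ, ω)` stands for `h (θ, X ω)`. -/
noncomputable def voteShare (μ : Measure Θ) (g : Θ × Ω → L) (k : L) (ω : Ω) : ℝ :=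
  μ.real {θ | g (θ, ω) = k}

/-- The term `T k` of the decomposition: the variance, over a random hypothesis, of the indicator
of a vote for `k`, averaged over the test data. -/
noncomputable def voteVariance (μ : Measure Θ) (ν : Measure Ω) (g : Θ × Ω → L) (k : L) : ℝ :=
  ∫ ω, voteShare μ g k ω * (1 - voteShare μ g k ω) ∂ν

/-- The test error `Err θ` of a hypothesis. -/
noncomputable def testError (ν : Measure Ω) (g : Θ × Ω → L) (Y : Ω → L) (θ : Θ) : ℝ :=
  ν.real {ω | g (θ, ω) ≠ Y ω}

/-- The expected pairwise disagreement of two independent random hypotheses. -/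
noncomputable def expectedDisagreement (μ : Measure Θ) (ν : Measure Ω) (g : Θ × Ω → L) : ℝ :=
  ∫ p : Θ × Θ, ν.real {ω | g (p.1, ω) ≠ g (p.2, ω)} ∂μ.prod μ

/-- Confidence–prediction calibration of the class `k` with constant `c`: given the confidence
`h̃ k`, the conditional probability of the class `k` is `c * h̃ k`. -/
def IsCalibrated [DecidableEq L] (μ : Measure Θ) (ν : Measure Ω) (g : Θ × Ω → L) (Y : Ω → L)
    (k : L) (c : ℝ) : Prop :=
  ν[(fun ω => if Y ω = k then (1 : ℝ) else 0) |
      MeasurableSpace.comap (voteShare μ g k) Real.measurableSpace]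
    =ᵐ[ν] fun ω => c * voteShare μ g k ω

variable [MeasurableSpace L] [MeasurableSingletonClass L]
  {μ : Measure Θ} {ν : Measure Ω} {g : Θ × Ω → L} {Y : Ω → L}

theorem measurable_voteShare [SFinite μ] (hg : Measurable g) (k : L) :
    Measurable (voteShare μ g k) :=
  (measurable_measure_prodMk_right (hg (measurableSet_singleton k))).ennreal_toReal

theorem integrable_voteShare [IsFiniteMeasure μ] [IsFiniteMeasure ν] (hg : Measurable g) (k : L) :
    Integrable (voteShare μ g k) ν :=
  .of_bound (measurable_voteShare hg k).aestronglyMeasurable (μ.real Set.univ) <|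
    .of_forall fun _ => (Real.norm_of_nonneg measureReal_nonneg).trans_le <|
      measureReal_mono (Set.subset_univ _)

variable [IsProbabilityMeasure μ]

theorem measureReal_vote_ne (hg : Measurable g) (k : L) (ω : Ω) :
    μ.real {θ | g (θ, ω) ≠ k} = 1 - voteShare μ g k ω :=
  probReal_compl_eq_one_sub (measurable_prodMk_right (hg (measurableSet_singleton k)))

theorem norm_one_sub_voteShare_le_one (hg : Measurable g) (k : L) (ω : Ω) :
    ‖1 - voteShare μ g k ω‖ ≤ 1 := by
  rw [← measureReal_vote_ne hg, Real.norm_of_nonneg measureReal_nonneg]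
  exact measureReal_le_one

theorem integrable_one_sub_voteShare_mul (hg : Measurable g) (k : L) {f : Ω → ℝ}
    (hf : Integrable f ν) : Integrable (fun ω => (1 - voteShare μ g k ω) * f ω) ν :=
  hf.bdd_mul ((measurable_voteShare hg k).const_sub 1).aestronglyMeasurable
    (.of_forall (norm_one_sub_voteShare_le_one hg k))

variable [IsFiniteMeasure ν]

theorem IsCalibrated.integral_one_sub_voteShare_mul_ite [DecidableEq L] {k : L} {c : ℝ}
    (hcal : IsCalibrated μ ν g Y k c) (hg : Measurable g) (hY : Measurable Y) :
    ∫ ω, (1 - voteShare μ g k ω) * (if Y ω = k then 1 else 0) ∂ν = c * voteVariance μ ν g k := by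
  have hY_int := integrable_ite_eq_one_zero (ν := ν) hY k
  have hφ : StronglyMeasurable[MeasurableSpace.comap (voteShare μ g k) Real.measurableSpace]
      fun ω => 1 - voteShare μ g k ω :=
    ((comap_measurable (voteShare μ g k)).const_sub 1).stronglyMeasurable
  rw [integral_mul_of_condExp_ae_eq (measurable_voteShare hg k).comap_le hφ
    (integrable_one_sub_voteShare_mul hg k hY_int) hY_int hcal, voteVariance, ← integral_const_mul]
  exact integral_congr_ae (.of_forall fun _ => by ring)

theorem expectedDisagreement_eq_sum_voteVariance [Fintype L] (hg : Measurable g) :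
    expectedDisagreement μ ν g = ∑ k, voteVariance μ ν g k := by
  have disagreement_at (ω : Ω) : (μ.prod μ).real {p | g (p.1, ω) ≠ g (p.2, ω)} =
      ∑ k, voteShare μ g k ω * (1 - voteShare μ g k ω) := by
    have hgω : Measurable fun θ => g (θ, ω) := hg.comp measurable_prodMk_right
    simp_rw [measureReal_prod_ne μ μ hgω hgω, measureReal_vote_ne hg, voteShare]
  have measurableSet_disagree :
      MeasurableSet {q : (Θ × Θ) × Ω | g (q.1.1, q.2) ≠ g (q.1.2, q.2)} :=
    (measurableSet_eq_fun (by fun_prop) (by fun_prop)).compl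
  calc expectedDisagreement μ ν g
      = ∫ ω, (μ.prod μ).real {p | g (p.1, ω) ≠ g (p.2, ω)} ∂ν :=
        integral_measureReal_slice_comm (μ.prod μ) ν measurableSet_disagree
    _ = ∑ k, voteVariance μ ν g k := by
        simp_rw [disagreement_at, voteVariance]
        refine integral_finsetSum _ fun k _ => ?_
        simpa only [mul_comm] using
          integrable_one_sub_voteShare_mul hg k (integrable_voteShare (μ := μ) hg k)

theorem integral_testError_eq_sum [Fintype L] [DecidableEq L] (hg : Measurable g)
    (hY : Measurable Y) :
    ∫ θ, testError ν g Y θ ∂μ =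
      ∑ k, ∫ ω, (1 - voteShare μ g k ω) * (if Y ω = k then 1 else 0) ∂ν := by
  have error_at (ω : Ω) : μ.real {θ | g (θ, ω) ≠ Y ω} =
      ∑ k, (1 - voteShare μ g k ω) * (if Y ω = k then 1 else 0) := by
    simp [measureReal_vote_ne hg]
  have measurableSet_err : MeasurableSet {q : Θ × Ω | g q ≠ Y q.2} :=
    (measurableSet_eq_fun hg (by fun_prop)).compl
  calc ∫ θ, testError ν g Y θ ∂μ
      = ∫ ω, μ.real {θ | g (θ, ω) ≠ Y ω} ∂ν :=
        integral_measureReal_slice_comm μ ν measurableSet_err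
    _ = ∑ k, ∫ ω, (1 - voteShare μ g k ω) * (if Y ω = k then 1 else 0) ∂ν := by
        simp_rw [error_at]
        exact integral_finsetSum _ fun k _ =>
          integrable_one_sub_voteShare_mul hg k (integrable_ite_eq_one_zero hY k)

theorem integral_testError_of_isCalibrated [Fintype L] [DecidableEq L] (hg : Measurable g)
    (hY : Measurable Y) {c : L → ℝ} (hcal : ∀ k, IsCalibrated μ ν g Y k (c k)) :
    ∫ θ, testError ν g Y θ ∂μ = ∑ k, c k * voteVariance μ ν g k := by
  rw [integral_testError_eq_sum hg hY]
  exact Finset.sum_congr rfl fun k _ => (hcal k).integral_one_sub_voteShare_mul_ite hg hY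

theorem pdd_decomposition_robust_general [Finite L] [DecidableEq L] (hg : Measurable g)
    (hY : Measurable Y) {k' : L} {a b : ℝ} (hb : b ≠ 0) (calib_over : IsCalibrated μ ν g Y k' a)
    (calib_rest : ∀ k ≠ k', IsCalibrated μ ν g Y k b) :
    expectedDisagreement μ ν g =
      (b - a) / b * voteVariance μ ν g k' + 1 / b * ∫ θ, testError ν g Y θ ∂μ := by
  have := Fintype.ofFinite L
  have hcal (k : L) : IsCalibrated μ ν g Y k (if k = k' then a else b) := by
    split_ifs with hk
    · exact hk ▸ calib_over
    · exact calib_rest k hk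
  have error_eq : ∫ θ, testError ν g Y θ ∂μ =
      b * expectedDisagreement μ ν g - (b - a) * voteVariance μ ν g k' := calc
    _ = ∑ k, (if k = k' then a else b) * voteVariance μ ν g k :=
      integral_testError_of_isCalibrated hg hY hcal
    _ = ∑ k, (b * voteVariance μ ν g k - if k = k' then (b - a) * voteVariance μ ν g k else 0) :=
      Finset.sum_congr rfl fun k _ => by split_ifs <;> ring
    _ = _ := by
      simp [Finset.sum_sub_distrib, ← Finset.mul_sum, expectedDisagreement_eq_sum_voteVariance hg]
  rw [error_eq]
  field_simp
  ring

end Voting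

/-- PDD decomposition step in the proof of Theorem 2. -/
theorem pdd_decomposition_robust
    {Θ Ω 𝒳 : Type*} [MeasurableSpace Θ] [MeasurableSpace Ω] [MeasurableSpace 𝒳]
    (μ : Measure Θ) (ν : Measure Ω)
    [IsProbabilityMeasure μ] [IsProbabilityMeasure ν]
    (K : ℕ) (hK : 1 ≤ K)
    (h : Θ × 𝒳 → Fin K) (hmeas : Measurable h)
    (X : Ω → 𝒳) (hX : Measurable X)
    (Y : Ω → Fin K) (hY : Measurable Y)
    (htilde : Fin K → 𝒳 → ℝ)
    (htilde_def : ∀ k x, htilde k x = (μ {θ | h (θ, x) = k}).toReal)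
    (Err : Θ → ℝ)
    (Err_def : ∀ θ, Err θ = (ν {ω | h (θ, X ω) ≠ Y ω}).toReal)
    (k' : Fin K) (a b : ℝ) (hb : 1 ≤ b) (ha0 : 0 ≤ a) (ha1 : a ≤ 1)
    (calib_over :
      ν[(fun ω => if Y ω = k' then (1 : ℝ) else 0) |
          MeasurableSpace.comap (fun ω => htilde k' (X ω)) Real.measurableSpace]
        =ᵐ[ν] fun ω => a * htilde k' (X ω))
    (calib_rest : ∀ k : Fin K, k ≠ k' →
      ν[(fun ω => if Y ω = k then (1 : ℝ) else 0) |
          MeasurableSpace.comap (fun ω => htilde k (X ω)) Real.measurableSpace]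
        =ᵐ[ν] fun ω => b * htilde k (X ω)) :
    ∫ p : Θ × Θ,
        (∫ ω, (if h (p.1, X ω) = h (p.2, X ω) then (0 : ℝ) else 1) ∂ν) ∂(μ.prod μ) =
      ((b - a) / b) * (∫ ω, htilde k' (X ω) * (1 - htilde k' (X ω)) ∂ν) +
        (1 / b) * ∫ θ, Err θ ∂μ := by
  obtain rfl : htilde = fun k x => μ.real {θ | h (θ, x) = k} := funext₂ htilde_def
  obtain rfl : Err = testError ν (fun q : Θ × Ω => h (q.1, X q.2)) Y := funext Err_def
  have hg : Measurable fun q : Θ × Ω => h (q.1, X q.2) := by fun_prop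
  have disagreement_eq (p : Θ × Θ) := integral_ite_eq_zero_one ν
    (u := fun ω => h (p.1, X ω)) (v := fun ω => h (p.2, X ω)) (by fun_prop) (by fun_prop)
  simp_rw [disagreement_eq]
  exact pdd_decomposition_robust_general hg hY (by positivity) calib_over calib_rest
end

section
/- (Justification for omitting C in Equation (9): scaled PDD upper-bounds the error.) Suppose robust confidence–prediction calibration holds with over-confident class k' and constants b ≥ 1, 0 ≤ a ≤ 1. Since 0 ≤ h̃_{k'}(x) ≤ 1 for all x, the constant C = (b − a) ∫_Ω h̃_{k'}(X(ω)) (1 − h̃_{k'}(X(ω))) dν(ω) is nonnegative, and consequently ∫_Θ Err(θ) dμ(θ) ≤ b · ∫_{Θ^{N+1}} PDD_N d(μ^{⊗(N+1)}) for every N ≥ 1. -/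
open MeasureTheory

/-!
Draw `θ` from `μ` and fix a test point `ω`. Two independent labels `f`, `g` differ with probability
`∑ k, P(f = k) (1 - P(g = k))`. Taking for `g` the prediction of a random hypothesis and for `f`
either the true label or the prediction of an independent hypothesis, Fubini turns the expected
test error into `∑ k, 𝔼[1{Y = k} (1 - h̃ₖ)]` and the expected disagreement into
`∑ k, 𝔼[h̃ₖ (1 - h̃ₖ)]`. As `1 - h̃ₖ` is a function of `h̃ₖ`, calibration replaces `1{Y = k}` by
`b h̃ₖ`, or by `a h̃ₖ` when `k = k'`: the error is `b` times the disagreement, minus `C`.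
-/

section Disagreement

variable {Ω κ : Type*} [MeasurableSpace Ω]

/-- The probability that two labellings of `Ω` differ. The test error of a hypothesis is its
disagreement with the true labels. -/
noncomputable def disagreement (ν : Measure Ω) (f g : Ω → κ) : ℝ :=
  ν.real {ω | f ω ≠ g ω}

lemma disagreement_comm (ν : Measure Ω) (f g : Ω → κ) :
    disagreement ν f g = disagreement ν g f := by
  simp only [disagreement, ne_comm]

variable [MeasurableSpace κ]

lemma disagreement_eq_sum [Fintype κ] [MeasurableSingletonClass κ] (ν : Measure Ω)
    [IsFiniteMeasure ν] {f g : Ω → κ} (hf : Measurable f) (hg : Measurable g) :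
    disagreement ν f g = ∑ k, ν.real (f ⁻¹' {k} ∩ g ⁻¹' {k}ᶜ) := by
  have hsplit : {ω | f ω ≠ g ω} = ⋃ k, f ⁻¹' {k} ∩ g ⁻¹' {k}ᶜ := by
    ext ω
    simp [eq_comm]
  have hdisj : Pairwise (Function.onFun Disjoint fun k => f ⁻¹' {k} ∩ g ⁻¹' {k}ᶜ) :=
    fun k l hkl => ((Set.disjoint_singleton.2 hkl).preimage f).mono
      Set.inter_subset_left Set.inter_subset_left
  rw [disagreement, hsplit, measureReal_iUnion_fintype hdisj fun k =>
    (hf (measurableSet_singleton k)).inter (hg (measurableSet_singleton k).compl)]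

lemma disagreement_eq_sum_of_indepFun [Fintype κ] [MeasurableSingletonClass κ] {ν : Measure Ω}
    [IsProbabilityMeasure ν] {f g : Ω → κ} (hf : Measurable f) (hg : Measurable g)
    (hfg : ProbabilityTheory.IndepFun f g ν) :
    disagreement ν f g = ∑ k, ν.real (f ⁻¹' {k}) * (1 - ν.real (g ⁻¹' {k})) := by
  rw [disagreement_eq_sum ν hf hg]
  refine Finset.sum_congr rfl fun k _ => ?_
  have hk : MeasurableSet {k} := measurableSet_singleton k
  rw [measureReal_def, hfg.measure_inter_preimage_eq_mul _ _ hk hk.compl, ENNReal.toReal_mul,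
    ← measureReal_def, ← measureReal_def, Set.preimage_compl, probReal_compl_eq_one_sub (hg hk)]

variable {Θ : Type*} [MeasurableSpace Θ]

lemma measurable_uncurry_eval {ι : Type*} {h : Θ → Ω → κ} (hh : Measurable h.uncurry) (i : ι) :
    Measurable (Function.uncurry fun θs : ι → Θ => h (θs i)) :=
  hh.comp (g := h.uncurry) (f := fun p : (ι → Θ) × Ω => (p.1 i, p.2)) (by fun_prop)

variable [MeasurableEq κ] {f g : Θ → Ω → κ}

lemma integrable_disagreement (μ : Measure Θ) [IsFiniteMeasure μ] (ν : Measure Ω)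
    [IsFiniteMeasure ν] (hf : Measurable f.uncurry) (hg : Measurable g.uncurry) :
    Integrable (fun θ => disagreement ν (f θ) (g θ)) μ :=
  Measure.integrable_measure_prodMk_left (measurableSet_eq_fun hf hg).compl (measure_ne_top _ _)

lemma integral_disagreement_swap (μ : Measure Θ) [IsFiniteMeasure μ] (ν : Measure Ω)
    [IsFiniteMeasure ν] (hf : Measurable f.uncurry) (hg : Measurable g.uncurry) :
    ∫ θ, disagreement ν (f θ) (g θ) ∂μ =
      ∫ ω, disagreement μ (fun θ => f θ ω) (fun θ => g θ ω) ∂ν := by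
  set S : Set (Θ × Ω) := {p | f p.1 p.2 ≠ g p.1 p.2}
  have hS : MeasurableSet S := (measurableSet_eq_fun hf hg).compl
  have hν (θ : Θ) : disagreement ν (f θ) (g θ) = ∫ ω, S.indicator (1 : Θ × Ω → ℝ) (θ, ω) ∂ν :=
    (integral_indicator_one (measurable_prodMk_left hS)).symm
  have hμ (ω : Ω) : disagreement μ (fun θ => f θ ω) (fun θ => g θ ω) =
      ∫ θ, S.indicator (1 : Θ × Ω → ℝ) (θ, ω) ∂μ :=
    (integral_indicator_one (measurable_prodMk_right hS)).symm
  simp only [hν, hμ]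
  exact integral_integral_swap ((integrable_const (1 : ℝ)).indicator hS)

end Disagreement

section Confidence

variable {Θ Ω κ : Type*} [MeasurableSpace Θ]

/-- The expectation function `h̃ₖ` of the paper along the test data: the `μ`-probability that a
random hypothesis labels `ω` with `k`. The input map `X` is absorbed into the family of
predictors, `h θ ω` being the prediction of `θ` at `X ω`. -/
noncomputable def confidence (μ : Measure Θ) (h : Θ → Ω → κ) (k : κ) (ω : Ω) : ℝ :=
  μ.real {θ | h θ ω = k}

lemma confidence_nonneg (μ : Measure Θ) (h : Θ → Ω → κ) (k : κ) (ω : Ω) :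
    0 ≤ confidence μ h k ω :=
  measureReal_nonneg

lemma confidence_le_one (μ : Measure Θ) [IsProbabilityMeasure μ] (h : Θ → Ω → κ) (k : κ) (ω : Ω) :
    confidence μ h k ω ≤ 1 :=
  measureReal_le_one

lemma confidence_const [DecidableEq κ] (μ : Measure Θ) [IsProbabilityMeasure μ] (Y : Ω → κ)
    (k : κ) (ω : Ω) : confidence μ (fun _ => Y) k ω = if Y ω = k then 1 else 0 := by
  by_cases hk : Y ω = k <;> simp [confidence, hk]

lemma confidence_comp_measurePreserving {Θ' : Type*} [MeasurableSpace Θ'] [MeasurableSpace κ]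
    [MeasurableSingletonClass κ] {μ : Measure Θ} {μ' : Measure Θ'} {φ : Θ' → Θ}
    (hφ : MeasurePreserving φ μ' μ) {h : Θ → Ω → κ} {ω : Ω} (hh : Measurable fun θ => h θ ω)
    (k : κ) : confidence μ' (fun θ => h (φ θ)) k ω = confidence μ h k ω :=
  hφ.measureReal_preimage (hh (measurableSet_singleton k)).nullMeasurableSet

variable [MeasurableSpace Ω] [MeasurableSpace κ] [MeasurableSingletonClass κ]

lemma measurable_confidence (μ : Measure Θ) [SFinite μ] {h : Θ → Ω → κ}
    (hh : Measurable h.uncurry) (k : κ) : Measurable (confidence μ h k) :=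
  (measurable_measure_prodMk_right (hh (measurableSet_singleton k))).ennreal_toReal

lemma integrable_confidence_mul_one_sub (μ : Measure Θ) [IsProbabilityMeasure μ] (ν : Measure Ω)
    [IsFiniteMeasure ν] {f g : Θ → Ω → κ} (hf : Measurable f.uncurry) (hg : Measurable g.uncurry)
    (k : κ) : Integrable (fun ω => confidence μ f k ω * (1 - confidence μ g k ω)) ν := by
  refine Integrable.of_mem_Icc 0 1 ((measurable_confidence μ hf k).mul
    ((measurable_confidence μ hg k).const_sub 1)).aemeasurable (.of_forall fun ω => ?_)
  exact unitInterval.mul_mem ⟨confidence_nonneg μ f k ω, confidence_le_one μ f k ω⟩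
    (Set.Icc.mem_iff_one_sub_mem.1 ⟨confidence_nonneg μ g k ω, confidence_le_one μ g k ω⟩)

lemma integral_disagreement_of_indepFun [Fintype κ] (μ : Measure Θ) [IsProbabilityMeasure μ]
    (ν : Measure Ω) [IsFiniteMeasure ν] {f g : Θ → Ω → κ} (hf : Measurable f.uncurry)
    (hg : Measurable g.uncurry)
    (hfg : ∀ ω, ProbabilityTheory.IndepFun (fun θ => f θ ω) (fun θ => g θ ω) μ) :
    ∫ θ, disagreement ν (f θ) (g θ) ∂μ =
      ∑ k, ∫ ω, confidence μ f k ω * (1 - confidence μ g k ω) ∂ν := by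
  rw [integral_disagreement_swap μ ν hf hg,
    ← integral_finsetSum _ fun k _ => integrable_confidence_mul_one_sub μ ν hf hg k]
  exact integral_congr_ae <| .of_forall fun ω =>
    disagreement_eq_sum_of_indepFun hf.of_uncurry_right hg.of_uncurry_right (hfg ω)

lemma integral_disagreement_label [Fintype κ] [DecidableEq κ] (μ : Measure Θ)
    [IsProbabilityMeasure μ] (ν : Measure Ω) [IsFiniteMeasure ν] {h : Θ → Ω → κ}
    (hh : Measurable h.uncurry) {Y : Ω → κ} (hY : Measurable Y) :
    ∫ θ, disagreement ν (h θ) Y ∂μ =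
      ∑ k, ∫ ω, (if Y ω = k then 1 else 0) * (1 - confidence μ h k ω) ∂ν := by
  simp_rw [disagreement_comm ν _ Y, ← confidence_const μ Y]
  exact integral_disagreement_of_indepFun μ ν (f := fun _ => Y) (hY.comp measurable_snd) hh
    fun _ => ProbabilityTheory.indepFun_const_left _ _

lemma integral_disagreement_eval_pi [Fintype κ] (μ : Measure Θ) [IsProbabilityMeasure μ]
    (ν : Measure Ω) [IsFiniteMeasure ν] {ι : Type*} [Fintype ι] {h : Θ → Ω → κ}
    (hh : Measurable h.uncurry) {i j : ι} (hij : i ≠ j) :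
    ∫ θs, disagreement ν (h (θs i)) (h (θs j)) ∂(Measure.pi fun _ : ι => μ) =
      ∑ k, ∫ ω, confidence μ h k ω * (1 - confidence μ h k ω) ∂ν := by
  have hindep (ω : Ω) : ProbabilityTheory.IndepFun (fun θs : ι → Θ => h (θs i) ω)
      (fun θs => h (θs j) ω) (Measure.pi fun _ => μ) :=
    (ProbabilityTheory.iIndepFun_pi (X := fun _ θ => h θ ω)
      fun _ => hh.of_uncurry_right.aemeasurable).indepFun hij
  rw [integral_disagreement_of_indepFun _ ν (measurable_uncurry_eval hh i)
    (measurable_uncurry_eval hh j) hindep]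
  simp only [confidence_comp_measurePreserving (measurePreserving_eval (fun _ : ι => μ) _)
    hh.of_uncurry_right]

end Confidence

section Dropout

variable {Θ Ω κ : Type*} [MeasurableSpace Ω] [DecidableEq κ]

/-- The prediction disagreement with dropouts `PDD_N(θ₀, …, θ_N)`: how often the prediction of the
base hypothesis `θ₀` differs from those of the dropouts `θ₁, …, θ_N`, on average. It is `0` when
`N = 0`. -/
noncomputable def dropoutDisagreement (ν : Measure Ω) (h : Θ → Ω → κ) (N : ℕ)
    (θs : Fin (N + 1) → Θ) : ℝ :=
  ∫ ω, (1 / (N : ℝ)) *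
    ∑ i : Fin N, (if h (θs 0) ω = h (θs i.succ) ω then (0 : ℝ) else 1) ∂ν

variable [MeasurableSpace κ] {h : Θ → Ω → κ}

lemma dropoutDisagreement_eq_average [MeasurableEq κ] (ν : Measure Ω) [IsFiniteMeasure ν]
    (hh : ∀ θ, Measurable (h θ)) {N : ℕ} (θs : Fin (N + 1) → Θ) :
    dropoutDisagreement ν h N θs =
      1 / (N : ℝ) * ∑ i : Fin N, disagreement ν (h (θs 0)) (h (θs i.succ)) := by
  have hS (i : Fin N) : MeasurableSet {ω | h (θs 0) ω ≠ h (θs i.succ) ω} :=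
    (measurableSet_eq_fun (hh _) (hh _)).compl
  have hind (i : Fin N) : (fun ω => if h (θs 0) ω = h (θs i.succ) ω then (0 : ℝ) else 1) =
      {ω | h (θs 0) ω ≠ h (θs i.succ) ω}.indicator 1 := by
    ext ω
    simp [Set.indicator_apply, ite_not]
  rw [dropoutDisagreement, integral_const_mul, integral_finsetSum]
  · simp only [hind, integral_indicator_one (hS _), disagreement]
  · intro i _
    rw [hind]
    exact (integrable_const 1).indicator (hS i)

lemma integral_dropoutDisagreement [MeasurableSpace Θ] [Fintype κ] [MeasurableSingletonClass κ]
    (μ : Measure Θ) [IsProbabilityMeasure μ] (ν : Measure Ω) [IsFiniteMeasure ν]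
    (hh : Measurable h.uncurry) {N : ℕ} (hN : N ≠ 0) :
    ∫ θs, dropoutDisagreement ν h N θs ∂(Measure.pi fun _ : Fin (N + 1) => μ) =
      ∑ k, ∫ ω, confidence μ h k ω * (1 - confidence μ h k ω) ∂ν := by
  simp_rw [dropoutDisagreement_eq_average ν (fun _ => hh.of_uncurry_left)]
  rw [integral_const_mul, integral_finsetSum _ fun i _ =>
    integrable_disagreement _ ν (measurable_uncurry_eval hh 0)
      (measurable_uncurry_eval hh i.succ)]
  simp only [integral_disagreement_eval_pi μ ν hh (Fin.succ_ne_zero _).symm, Finset.sum_const,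
    Finset.card_univ, Fintype.card_fin, nsmul_eq_mul]
  field_simp

end Dropout

section Calibration

variable {Ω : Type*} {m mΩ : MeasurableSpace Ω} {ν : Measure Ω}

lemma integral_mul_eq_of_condExp_ae_eq {f g u : Ω → ℝ} (hm : m ≤ mΩ) [SigmaFinite (ν.trim hm)]
    (hfg : ν[f | m] =ᵐ[ν] g) (hu : StronglyMeasurable[m] u) (hf : Integrable f ν)
    (hfu : Integrable (f * u) ν) : ∫ ω, f ω * u ω ∂ν = ∫ ω, g ω * u ω ∂ν := by
  have hpull : ν[f * u | m] =ᵐ[ν] g * u :=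
    (condExp_mul_of_stronglyMeasurable_right hu hfu hf).trans (hfg.mul .rfl)
  exact (integral_condExp hm).symm.trans (integral_congr_ae hpull)

variable {Θ κ : Type*} [MeasurableSpace Θ] [DecidableEq κ]

/-- Calibration of class `k` with constant `c`: conditionally on the confidence in `k`, the label
is `k` with probability `c` times that confidence. Robust confidence–prediction calibration asks
this with `c = a` for the over-confident class and `c = b` for all others. -/
def IsCalibratedAt (μ : Measure Θ) (ν : Measure Ω) (h : Θ → Ω → κ) (Y : Ω → κ) (k : κ)
    (c : ℝ) : Prop :=
  ν[(fun ω => if Y ω = k then (1 : ℝ) else 0) |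
      MeasurableSpace.comap (confidence μ h k) Real.measurableSpace]
    =ᵐ[ν] fun ω => c * confidence μ h k ω

variable [MeasurableSpace κ] [MeasurableSingletonClass κ] [IsFiniteMeasure ν]
  {μ : Measure Θ} [IsProbabilityMeasure μ] {h : Θ → Ω → κ} {Y : Ω → κ}

lemma IsCalibratedAt.integral_label_mul_one_sub_confidence {k : κ} {c : ℝ}
    (hcal : IsCalibratedAt μ ν h Y k c) (hh : Measurable h.uncurry) (hY : Measurable Y) :
    ∫ ω, (if Y ω = k then 1 else 0) * (1 - confidence μ h k ω) ∂ν =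
      c * ∫ ω, confidence μ h k ω * (1 - confidence μ h k ω) ∂ν := by
  have hlabel : Integrable (fun ω => if Y ω = k then (1 : ℝ) else 0) ν :=
    Integrable.of_mem_Icc 0 1 (Measurable.ite (hY (measurableSet_singleton k)) measurable_const
      measurable_const).aemeasurable (.of_forall fun ω => by split_ifs <;> simp)
  have hprod : Integrable (fun ω => (if Y ω = k then 1 else 0) * (1 - confidence μ h k ω)) ν := by
    simpa only [confidence_const] using
      integrable_confidence_mul_one_sub μ ν (f := fun _ => Y) (hY.comp measurable_snd) hh k
  rw [integral_mul_eq_of_condExp_ae_eq (measurable_confidence μ hh k).comap_le hcal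
    ((comap_measurable _).const_sub 1).stronglyMeasurable hlabel hprod, ← integral_const_mul]
  simp only [mul_assoc]

variable [Finite κ] {k' : κ} {a b : ℝ}

theorem integral_error_eq_mul_integral_dropoutDisagreement_sub (hh : Measurable h.uncurry)
    (hY : Measurable Y) (hover : IsCalibratedAt μ ν h Y k' a)
    (hrest : ∀ k, k ≠ k' → IsCalibratedAt μ ν h Y k b) {N : ℕ} (hN : N ≠ 0) :
    ∫ θ, disagreement ν (h θ) Y ∂μ =
      b * ∫ θs, dropoutDisagreement ν h N θs ∂(Measure.pi fun _ : Fin (N + 1) => μ) -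
        (b - a) * ∫ ω, confidence μ h k' ω * (1 - confidence μ h k' ω) ∂ν := by
  have := Fintype.ofFinite κ
  have hsum : ∑ k ∈ Finset.univ.erase k',
      ∫ ω, (if Y ω = k then 1 else 0) * (1 - confidence μ h k ω) ∂ν =
      b * ∑ k ∈ Finset.univ.erase k', ∫ ω, confidence μ h k ω * (1 - confidence μ h k ω) ∂ν := by
    rw [Finset.mul_sum]
    exact Finset.sum_congr rfl fun k hk => (hrest k
      (Finset.ne_of_mem_erase hk)).integral_label_mul_one_sub_confidence hh hY
  rw [integral_disagreement_label μ ν hh hY, integral_dropoutDisagreement μ ν hh hN,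
    ← Finset.add_sum_erase _ _ (Finset.mem_univ k'), hsum,
    hover.integral_label_mul_one_sub_confidence hh hY,
    ← Finset.add_sum_erase _ _ (Finset.mem_univ k')]
  ring

theorem scaled_pdd_upper_bounds_error_general (hh : Measurable h.uncurry) (hY : Measurable Y)
    (hab : a ≤ b) (hover : IsCalibratedAt μ ν h Y k' a)
    (hrest : ∀ k, k ≠ k' → IsCalibratedAt μ ν h Y k b) :
    0 ≤ (b - a) * ∫ ω, confidence μ h k' ω * (1 - confidence μ h k' ω) ∂ν ∧
      ∀ N : ℕ, 1 ≤ N → ∫ θ, disagreement ν (h θ) Y ∂μ ≤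
        b * ∫ θs, dropoutDisagreement ν h N θs ∂(Measure.pi fun _ : Fin (N + 1) => μ) := by
  have hC : 0 ≤ (b - a) * ∫ ω, confidence μ h k' ω * (1 - confidence μ h k' ω) ∂ν :=
    mul_nonneg (sub_nonneg.2 hab) <| integral_nonneg fun ω =>
      mul_nonneg (confidence_nonneg μ h k' ω) (sub_nonneg.2 (confidence_le_one μ h k' ω))
  refine ⟨hC, fun N hN => ?_⟩
  rw [integral_error_eq_mul_integral_dropoutDisagreement_sub hh hY hover hrest
    (Nat.one_le_iff_ne_zero.1 hN)]
  exact sub_le_self _ hC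

end Calibration

/-- Omitting `C`: the constant `C` is nonnegative, hence scaled PDD upper-bounds the error. -/
theorem scaled_pdd_upper_bounds_error
    {Θ Ω 𝒳 : Type*} [MeasurableSpace Θ] [MeasurableSpace Ω] [MeasurableSpace 𝒳]
    (μ : Measure Θ) (ν : Measure Ω)
    [IsProbabilityMeasure μ] [IsProbabilityMeasure ν]
    (K : ℕ) (hK : 1 ≤ K)
    (h : Θ × 𝒳 → Fin K) (hmeas : Measurable h)
    (X : Ω → 𝒳) (hX : Measurable X)
    (Y : Ω → Fin K) (hY : Measurable Y)
    (htilde : Fin K → 𝒳 → ℝ)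
    (htilde_def : ∀ k x, htilde k x = (μ {θ | h (θ, x) = k}).toReal)
    (Err : Θ → ℝ)
    (Err_def : ∀ θ, Err θ = (ν {ω | h (θ, X ω) ≠ Y ω}).toReal)
    (k' : Fin K) (a b : ℝ) (hb : 1 ≤ b) (ha0 : 0 ≤ a) (ha1 : a ≤ 1)
    (calib_over :
      ν[(fun ω => if Y ω = k' then (1 : ℝ) else 0) |
          MeasurableSpace.comap (fun ω => htilde k' (X ω)) Real.measurableSpace]
        =ᵐ[ν] fun ω => a * htilde k' (X ω))
    (calib_rest : ∀ k : Fin K, k ≠ k' →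
      ν[(fun ω => if Y ω = k then (1 : ℝ) else 0) |
          MeasurableSpace.comap (fun ω => htilde k (X ω)) Real.measurableSpace]
        =ᵐ[ν] fun ω => b * htilde k (X ω))
    (PDD : (N : ℕ) → (Fin (N + 1) → Θ) → ℝ)
    (PDD_def : ∀ (N : ℕ) (θs : Fin (N + 1) → Θ),
      PDD N θs = ∫ ω, (1 / (N : ℝ)) *
        ∑ i : Fin N, (if h (θs 0, X ω) = h (θs i.succ, X ω) then (0 : ℝ) else 1) ∂ν) :
    0 ≤ (b - a) * (∫ ω, htilde k' (X ω) * (1 - htilde k' (X ω)) ∂ν) ∧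
      ∀ N : ℕ, 1 ≤ N →
        ∫ θ, Err θ ∂μ ≤
          b * ∫ θs, PDD N θs ∂(Measure.pi fun _ : Fin (N + 1) => μ) := by
  obtain rfl := funext₂ htilde_def
  obtain rfl := funext Err_def
  obtain rfl := funext₂ PDD_def
  exact scaled_pdd_upper_bounds_error_general (h := fun θ ω => h (θ, X ω))
    (hmeas.comp (measurable_fst.prodMk (hX.comp measurable_snd))) hY (ha1.trans hb)
    calib_over calib_rest
end
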